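/- Let n ≥ 1 and let v, w ∈ ℂ^{n+1} with v ≠ 0. Then ι_n(v) = ι_n(w) if and only if there exists λ ∈ ℂ with |λ| = 1 and w = λ·v (coordinatewise multiplication), where ι_n is the inductively defined map over ℂ described in the context. (Hence ι_n separates the fibers of the Hopf quotient, i.e. it descends to an injection of ℙ^n(ℂ) into the unit sphere.) -/

import Mathlib

/-!
Multiplying `v` by a phase `lam` leaves every `v i * conj (v j)` and every `‖v i‖ ^ 2` unchanged,
hence leaves `iota n v` unchanged.

Conversely, `iota n v = iota n w` forces `w` to be a phase multiple of `v`, by induction on `n`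
starting from `n = 1`. The first block of components of `iota (m + 2)` is a nonzero
multiple of `iota (m + 1)` of the truncated vectors, so these are related by a phase. If the
truncation of `v` is nonzero, the products `conj (v_last) * v_i` force the last coordinates to be
related by the same phase. If it vanishes, so does that of `w`, the real component gives
`‖v_last‖ = ‖w_last‖`, and a phase relating the last coordinates can be chosen freely; this
dichotomy is `exists_phase_snoc`. For `n = 1`, the two components determine
`‖v 0‖ ^ 2 + ‖v 1‖ ^ 2`, through `(x + y) ^ 2 = (x - y) ^ 2 + 4 * x * y`, hence both norms.
-/

open scoped BigOperators

noncomputable section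

/-- The radii `r_n` with `r_n^4 = ((n+1)/2)^2 (n-1)!`. -/
def rad (n : ℕ) : ℝ := ((((n : ℝ) + 1) / 2) ^ 2 * (Nat.factorial (n - 1) : ℝ)) ^ ((1 : ℝ) / 4)

/-- The number of (field) components of `ι_n`. -/
def numComp : ℕ → ℕ
  | 0 => 2
  | 1 => 2
  | (m + 2) => numComp (m + 1) + (m + 2) + 1

/-- The inductively defined maps `ι_n : 𝕜^{n+1} → 𝕜^{L_n+1}` (over `𝕜 = ℂ`), recorded via
their components, written as a sequence indexed by `ℕ` that vanishes beyond the
dimension of the codomain.  Real components are embedded into `𝕜` via `algebraMap`. -/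
def iota : (n : ℕ) → (Fin (n + 1) → ℂ) → ℕ → ℂ
  | 0, _, _ => 0
  | 1, v, j =>
      if j = 0 then 2 * v 0 * star (v 1)
      else if j = 1 then algebraMap ℝ ℂ (‖v 0‖ ^ 2 - ‖v 1‖ ^ 2)
      else 0
  | (m + 2), v, j =>
      let c : ℝ := ((m : ℝ) + 3) ^ (-(1 : ℝ) / 2)
      let b : ℝ := ((((m : ℝ) + 2) ^ 2 - 1) * (rad (m + 1)) ^ 4) ^ (-(1 : ℝ) / 2)
      let a : ℝ := (2 * ((m : ℝ) + 2) * ((m : ℝ) + 3)) ^ ((1 : ℝ) / 2) * b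
      if h : j < numComp (m + 1) then
        algebraMap ℝ ℂ c * iota (m + 1) (fun i => v i.castSucc) j
      else if h2 : j < numComp (m + 1) + (m + 2) then
        algebraMap ℝ ℂ (c * a) * star (v (Fin.last (m + 2))) *
          v ⟨j - numComp (m + 1), by omega⟩
      else if j = numComp (m + 1) + (m + 2) then
        algebraMap ℝ ℂ (c * b *
          ((∑ i : Fin (m + 2), ‖v i.castSucc‖ ^ 2) - ((m : ℝ) + 2) * ‖v (Fin.last (m + 2))‖ ^ 2))
      else 0

lemma exists_phase {x y : ℂ} (h : ‖x‖ = ‖y‖) : ∃ lam : ℂ, ‖lam‖ = 1 ∧ y = lam * x := by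
  by_cases hx : x = 0
  · subst hx
    have hy : y = 0 := by simpa using h.symm
    exact ⟨1, by simp, by simp [hy]⟩
  · refine ⟨y / x, ?_, by field_simp⟩
    rw [norm_div, h, div_self]
    rw [← h]
    simpa using hx

lemma star_mul_self_of_norm_eq_one {lam : ℂ} (h : ‖lam‖ = 1) : star lam * lam = 1 := by
  have := Complex.conj_mul' lam
  rw [h] at this
  simpa using this

/-- A phase relating all but the last coordinates extends to all coordinates, given the products
of the last coordinate with the others and, when the others all vanish, the norm of the last. -/
lemma exists_phase_snoc {k : ℕ} {v w : Fin (k + 1) → ℂ} {lam : ℂ} (hlam : ‖lam‖ = 1)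
    (hinit : ∀ i : Fin k, w i.castSucc = lam * v i.castSucc)
    (hprod : ∀ i : Fin k, star (v (Fin.last k)) * v i.castSucc =
      star (w (Fin.last k)) * w i.castSucc)
    (hlast : (∀ i : Fin k, v i.castSucc = 0) → ‖v (Fin.last k)‖ = ‖w (Fin.last k)‖) :
    ∃ mu : ℂ, ‖mu‖ = 1 ∧ w = fun i => mu * v i := by
  by_cases h0 : ∀ i : Fin k, v i.castSucc = 0
  · obtain ⟨mu, hmu, he⟩ := exists_phase (hlast h0)
    refine ⟨mu, hmu, funext fun i => ?_⟩
    refine Fin.lastCases he (fun i => ?_) i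
    rw [hinit, h0, mul_zero, mul_zero]
  · push Not at h0
    obtain ⟨i₀, hi₀⟩ := h0
    refine ⟨lam, hlam, funext fun i => ?_⟩
    refine Fin.lastCases ?_ hinit i
    have h1 : star (v (Fin.last k)) = star (w (Fin.last k)) * lam := by
      apply mul_right_cancel₀ hi₀
      rw [hprod, hinit]
      ring
    have h2 := congrArg star h1
    simp only [star_star, star_mul] at h2
    rw [h2, ← mul_assoc, mul_comm lam, star_mul_self_of_norm_eq_one hlam, one_mul]

lemma iota_eq_zero_of_le (n : ℕ) (v : Fin (n + 1) → ℂ) (j : ℕ) (hj : numComp n ≤ j) :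
    iota n v j = 0 := by
  match n with
  | 0 => simp [iota]
  | 1 =>
    simp only [numComp] at hj
    simp only [iota]
    rw [if_neg (by omega), if_neg (by omega)]
  | m + 2 =>
    simp only [numComp] at hj
    simp only [iota]
    rw [dif_neg (by omega), dif_neg (by omega), if_neg (by omega)]

lemma rad_pos (n : ℕ) : 0 < rad n := by
  unfold rad
  positivity

/-- Equality of `iota (m + 2)` splits into the three blocks of components; all the scalar factors
of the definition are positive and cancel. -/
lemma blocks_of_iota_eq {m : ℕ} {v w : Fin (m + 2 + 1) → ℂ} (h : iota (m + 2) v = iota (m + 2) w) :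
    iota (m + 1) (fun i => v i.castSucc) = iota (m + 1) (fun i => w i.castSucc) ∧
    (∀ i : Fin (m + 2), star (v (Fin.last (m + 2))) * v i.castSucc =
      star (w (Fin.last (m + 2))) * w i.castSucc) ∧
    (∑ i : Fin (m + 2), ‖v i.castSucc‖ ^ 2) - ((m : ℝ) + 2) * ‖v (Fin.last (m + 2))‖ ^ 2 =
      (∑ i : Fin (m + 2), ‖w i.castSucc‖ ^ 2) - ((m : ℝ) + 2) * ‖w (Fin.last (m + 2))‖ ^ 2 := by
  have hc : (0 : ℝ) < ((m : ℝ) + 3) ^ (-(1 : ℝ) / 2) := by positivity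
  have hb : (0 : ℝ) <
      ((((m : ℝ) + 2) ^ 2 - 1) * (rad (m + 1)) ^ 4) ^ (-(1 : ℝ) / 2) := by
    have h1 : (0 : ℝ) < ((m : ℝ) + 2) ^ 2 - 1 := by
      have : (0 : ℝ) ≤ m := Nat.cast_nonneg m
      nlinarith
    have h2 := rad_pos (m + 1)
    positivity
  have hs : (0 : ℝ) < (2 * ((m : ℝ) + 2) * ((m : ℝ) + 3)) ^ ((1 : ℝ) / 2) := by positivity
  simp only [funext_iff, iota] at h
  generalize ((m : ℝ) + 3) ^ (-(1 : ℝ) / 2) = c at h hc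
  generalize ((((m : ℝ) + 2) ^ 2 - 1) * (rad (m + 1)) ^ 4) ^ (-(1 : ℝ) / 2) = b at h hb
  generalize (2 * ((m : ℝ) + 2) * ((m : ℝ) + 3)) ^ ((1 : ℝ) / 2) = s at h hs
  refine ⟨funext fun j => ?_, fun i => ?_, ?_⟩
  · by_cases hj : j < numComp (m + 1)
    · have := h j
      rw [dif_pos hj, dif_pos hj] at this
      refine mul_left_cancel₀ ?_ this
      simpa using hc.ne'
    · rw [iota_eq_zero_of_le _ _ _ (not_lt.mp hj), iota_eq_zero_of_le _ _ _ (not_lt.mp hj)]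
  · have := h (numComp (m + 1) + i)
    have hi := i.isLt
    rw [dif_neg (by omega), dif_pos (by omega), dif_neg (by omega), dif_pos (by omega)] at this
    rw [mul_assoc, mul_assoc] at this
    have hne : algebraMap ℝ ℂ (c * (s * b)) ≠ 0 := by
      simpa using ⟨hc.ne', hs.ne', hb.ne'⟩
    have h3 := mul_left_cancel₀ hne this
    simp only [Nat.add_sub_cancel_left] at h3
    exact h3
  · have := h (numComp (m + 1) + (m + 2))
    rw [dif_neg (by omega), dif_neg (by omega), if_pos rfl, dif_neg (by omega), dif_neg (by omega),
      if_pos rfl] at this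
    exact mul_left_cancel₀ (mul_pos hc hb).ne' ((algebraMap ℝ ℂ).injective this)

lemma exists_phase_of_iota_one_eq {v w : Fin (1 + 1) → ℂ} (h : iota 1 v = iota 1 w) :
    ∃ lam : ℂ, ‖lam‖ = 1 ∧ w = fun i => lam * v i := by
  have hp : v 0 * star (v 1) = w 0 * star (w 1) := by
    have := congrFun h 0
    simp only [iota, if_true, mul_assoc] at this
    exact mul_left_cancel₀ two_ne_zero this
  have hd : ‖v 0‖ ^ 2 - ‖v 1‖ ^ 2 = ‖w 0‖ ^ 2 - ‖w 1‖ ^ 2 := by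
    have := congrFun h 1
    simp only [iota, if_true, one_ne_zero, if_false] at this
    exact (algebraMap ℝ ℂ).injective this
  have hn : ‖v 0‖ * ‖v 1‖ = ‖w 0‖ * ‖w 1‖ := by
    simpa using congrArg norm hp
  have hs : ‖v 0‖ ^ 2 + ‖v 1‖ ^ 2 = ‖w 0‖ ^ 2 + ‖w 1‖ ^ 2 := by
    rw [← sq_eq_sq₀ (by positivity) (by positivity)]
    linear_combination (‖v 0‖ ^ 2 - ‖v 1‖ ^ 2 + (‖w 0‖ ^ 2 - ‖w 1‖ ^ 2)) * hd +
      4 * (‖v 0‖ * ‖v 1‖ + ‖w 0‖ * ‖w 1‖) * hn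
  have h0 : ‖v 0‖ = ‖w 0‖ := by
    rw [← sq_eq_sq₀ (norm_nonneg _) (norm_nonneg _)]
    linarith
  have h1 : ‖v 1‖ = ‖w 1‖ := by
    rw [← sq_eq_sq₀ (norm_nonneg _) (norm_nonneg _)]
    linarith
  obtain ⟨lam, hlam, he⟩ := exists_phase h0
  refine exists_phase_snoc hlam (fun i => ?_) (fun i => ?_) (fun _ => h1)
  · rw [Subsingleton.elim i 0]
    exact he
  · rw [Subsingleton.elim i 0, mul_comm, mul_comm (star (w _))]
    exact hp

lemma exists_phase_of_iota_eq (m : ℕ) (v w : Fin (m + 1 + 1) → ℂ)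
    (h : iota (m + 1) v = iota (m + 1) w) :
    ∃ lam : ℂ, ‖lam‖ = 1 ∧ w = fun i => lam * v i := by
  induction m with
  | zero => exact exists_phase_of_iota_one_eq h
  | succ m ih =>
    obtain ⟨hinit, hprod, hreal⟩ := blocks_of_iota_eq h
    obtain ⟨lam, hlam, he⟩ := ih _ _ hinit
    have he' : ∀ i : Fin (m + 2), w i.castSucc = lam * v i.castSucc := fun i => congrFun he i
    refine exists_phase_snoc hlam he' hprod fun hzero => ?_
    simp only [he', hzero, mul_zero, norm_zero] at hreal
    rw [← sq_eq_sq₀ (norm_nonneg _) (norm_nonneg _)]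
    have hm : ((m : ℝ) + 2) ≠ 0 := by positivity
    apply mul_left_cancel₀ hm
    linarith

lemma iota_phase_mul (n : ℕ) (v : Fin (n + 1) → ℂ) {lam : ℂ} (hlam : ‖lam‖ = 1) :
    iota n (fun i => lam * v i) = iota n v := by
  have hl := star_mul_self_of_norm_eq_one hlam
  match n with
  | 0 => rfl
  | 1 =>
    funext j
    have e : 2 * (lam * v 0) * star (lam * v 1) = 2 * v 0 * star (v 1) := by
      rw [star_mul]
      linear_combination (2 * v 0 * star (v 1)) * hl
    simp only [iota, e, norm_mul, hlam, one_mul]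
  | m + 2 =>
    have ih := iota_phase_mul (m + 1) (fun i => v i.castSucc) hlam
    have e : ∀ a x y : ℂ, a * star (lam * x) * (lam * y) = a * star x * y := by
      intro a x y
      rw [star_mul]
      linear_combination (a * star x * y) * hl
    funext j
    simp only [iota, e, ih, norm_mul, hlam, one_mul]

/-- For `v ≠ 0`, `ι_n(v) = ι_n(w)` iff `w` is a unit-circle multiple of `v`;
hence `ι_n` descends to an injection of `ℙ^n(ℂ)` into the unit sphere. -/
theorem iota_eq_iff_circle_smul (n : ℕ) (hn : 1 ≤ n) (v w : Fin (n + 1) → ℂ)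
    (hv : v ≠ 0) :
    iota n v = iota n w ↔ ∃ lam : ℂ, ‖lam‖ = 1 ∧ w = fun i => lam * v i := by
  constructor
  · intro h
    obtain ⟨m, rfl⟩ := Nat.exists_eq_add_of_le' hn
    exact exists_phase_of_iota_eq m v w h
  · rintro ⟨lam, hlam, rfl⟩
    exact (iota_phase_mul n v hlam).symm

end
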